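/- arXiv:1007.3014 — 2 statements merged into one kernel-verified Lean document; each statement's English description precedes it below -/
import Mathlib

section
/- Let Γ be a Jordan curve in ℝ² and let T and T' be locally finite tilings of ℝ² such that R_{T'} > R_T and K_{T'} < L(Γ,T') ≤ L(Γ,T). Then L(Γ,T') ≤ 2 K_{T'} · (R_T / (R_{T'} − R_T)) · L(Γ,T). -/
/-!
The curve enters only through its connectedness. Write `R`, `R'` for the tile radii of `T`, `T'`.

* A volume comparison (`card_le_tK`) shows that at most `K_{T'}` tiles of `T'` meet a closed ball of
  radius `2 R'`. Since `L(Γ,T') > K_{T'}`, the curve is contained in no such ball.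
* Let `S ⊆ Γ` be a finite set of points at pairwise distance `> 2 R'`. For `p ∈ S` the curve leaves
  the ball of radius `R' - R` about `p`, so the function `dist p` on `Γ` covers `[0, R' - R]`, while
  it varies by at most `2 R` on a tile of `T`. So at least `(R' - R) / (2 R)` tiles of `T` meet `Γ`
  inside this ball (`radius_le_card_mul`). A tile of `T` cannot meet the balls of two distinct
  points of `S`, whose distance exceeds `2 R`. Hence `|S| (R' - R) ≤ 2 R L(Γ,T)`
  (`card_separated_mul_le`).
* If `S` is maximal, the balls of radius `2 R'` about its points cover `Γ`, so
  `L(Γ,T') ≤ |S| K_{T'}`.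
-/

noncomputable section

/-- The Euclidean plane. -/
abbrev Plane : Type := EuclideanSpace ℝ (Fin 2)

/-- The closed unit ball of the plane. -/
def unitDisk : Set Plane := Metric.closedBall 0 1

/-- A tile is a closed subset of the plane homeomorphic to the closed unit ball. -/
def IsTile (t : Set Plane) : Prop := IsClosed t ∧ Nonempty (t ≃ₜ unitDisk)

/-- A tiling of the plane: a countable collection of tiles covering the plane,
with pairwise disjoint interiors. -/
structure Tiling where
  tiles : Set (Set Plane)
  countable : tiles.Countable
  isTile : ∀ t ∈ tiles, IsTile t
  covers : ⋃₀ tiles = Set.univ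
  disjInt : tiles.Pairwise fun t s => interior t ∩ interior s = ∅

/-- `rmin U` = sup of radii of closed balls contained in `U`. -/
def rmin (U : Set Plane) : ℝ :=
  sSup {r : ℝ | 0 < r ∧ ∃ x : Plane, Metric.closedBall x r ⊆ U}

/-- `r_T` : the infimum of `rmin` over the tiles. -/
def tilesr (C : Set (Set Plane)) : ℝ := sInf (rmin '' C)

/-- `R_T` : the supremum of the diameters of tiles, divided by 2. -/
def tilesR (C : Set (Set Plane)) : ℝ := sSup (Metric.diam '' C) / 2

/-- A tiling is locally finite if `R_T < ∞` (i.e. diameters are bounded above)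
and `r_T > 0`. -/
def LocFinite (C : Set (Set Plane)) : Prop := BddAbove (Metric.diam '' C) ∧ 0 < tilesr C

/-- `K_T = ⌊16 R_T² r_T⁻²⌋`. -/
def tK (C : Set (Set Plane)) : ℕ := ⌊16 * tilesR C ^ 2 / tilesr C ^ 2⌋₊

/-- `L(A, T)` : the number of tiles of `T` that intersect `A`. -/
def tL (A : Set Plane) (C : Set (Set Plane)) : ℕ := {t ∈ C | (t ∩ A).Nonempty}.ncard

/-- A simple curve: the image of a continuous injective map from `[0,1]`. -/
def IsSimpleCurve (γ : Set Plane) : Prop :=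
  ∃ f : Set.Icc (0:ℝ) 1 → Plane, Continuous f ∧ Function.Injective f ∧ γ = Set.range f

/-- A Jordan curve: the image of a continuous injective map from the circle `S¹`. -/
def IsJordanCurve (Γ : Set Plane) : Prop :=
  ∃ f : Metric.sphere (0 : Plane) 1 → Plane,
    Continuous f ∧ Function.Injective f ∧ Γ = Set.range f

open MeasureTheory Metric

theorem IsTile.isBounded {t : Set Plane} (ht : IsTile t) : Bornology.IsBounded t := by
  obtain ⟨-, ⟨e⟩⟩ := ht
  have : CompactSpace unitDisk := isCompact_iff_compactSpace.mp (isCompact_closedBall _ _)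
  have : CompactSpace t := e.symm.compactSpace
  exact (isCompact_iff_compactSpace.mpr this).isBounded

theorem tilesR_nonneg (C : Set (Set Plane)) : 0 ≤ tilesR C := by
  refine div_nonneg (Real.sSup_nonneg ?_) zero_le_two
  rintro _ ⟨t, -, rfl⟩
  exact diam_nonneg

theorem diam_le_two_mul_tilesR {C : Set (Set Plane)} (hC : LocFinite C) {t : Set Plane}
    (ht : t ∈ C) : diam t ≤ 2 * tilesR C := by
  have := le_csSup hC.1 (Set.mem_image_of_mem diam ht)
  unfold tilesR
  linarith

theorem Tiling.dist_le (T : Tiling) (hT : LocFinite T.tiles) {t : Set Plane} (ht : t ∈ T.tiles)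
    {x y : Plane} (hx : x ∈ t) (hy : y ∈ t) : dist x y ≤ 2 * tilesR T.tiles :=
  (dist_le_diam_of_mem (T.isTile t ht).isBounded hx hy).trans (diam_le_two_mul_tilesR hT ht)

theorem exists_closedBall_subset {C : Set (Set Plane)} {t : Set Plane} (ht : t ∈ C) {s : ℝ}
    (hs0 : 0 < s) (hs : s < tilesr C) : ∃ x, closedBall x s ⊆ t := by
  have hbdd : BddBelow (rmin '' C) := by
    refine ⟨0, ?_⟩
    rintro _ ⟨u, -, rfl⟩
    exact Real.sSup_nonneg fun r hr => hr.1.le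
  have h : s < rmin t := hs.trans_le (csInf_le hbdd (Set.mem_image_of_mem rmin ht))
  have hne : {r : ℝ | 0 < r ∧ ∃ x : Plane, closedBall x r ⊆ t}.Nonempty := by
    by_contra hne
    rw [Set.not_nonempty_iff_eq_empty] at hne
    rw [rmin, hne, Real.sSup_empty] at h
    linarith
  obtain ⟨r, ⟨-, x, hx⟩, hr⟩ := exists_lt_of_lt_csSup hne h
  exact ⟨x, (closedBall_subset_closedBall hr.le).trans hx⟩

/-- Tiles meeting a ball of radius `2 R_T` lie in the concentric ball of radius `4 R_T` and contain
disjoint balls of any radius `s < r_T`; compare areas. -/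
theorem card_mul_sq_le (T : Tiling) (hT : LocFinite T.tiles) (p : Plane) (F : Finset (Set Plane))
    (hF : ∀ t ∈ F, t ∈ T.tiles ∧ (t ∩ closedBall p (2 * tilesR T.tiles)).Nonempty)
    {s : ℝ} (hs0 : 0 < s) (hs : s < tilesr T.tiles) :
    (F.card : ℝ) * s ^ 2 ≤ (4 * tilesR T.tiles) ^ 2 := by
  have hR := tilesR_nonneg T.tiles
  have hc : ∀ t : Set Plane, ∃ x, t ∈ F → closedBall x s ⊆ t := by
    intro t
    by_cases ht : t ∈ F
    · obtain ⟨x, hx⟩ := exists_closedBall_subset (hF t ht).1 hs0 hs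
      exact ⟨x, fun _ => hx⟩
    · exact ⟨0, fun h => absurd h ht⟩
  choose c hc using hc
  have hint : ∀ t ∈ F, ball (c t) s ⊆ interior t := fun t ht =>
    interior_maximal (ball_subset_closedBall.trans (hc t ht)) isOpen_ball
  have hdisj : (F : Set (Set Plane)).PairwiseDisjoint fun t => ball (c t) s := by
    intro t ht u hu htu
    refine (Set.disjoint_iff_inter_eq_empty.mpr
      (T.disjInt (hF t ht).1 (hF u hu).1 htu)).mono (hint t ht) (hint u hu)
  have hsub : (⋃ t ∈ F, ball (c t) s) ⊆ closedBall p (4 * tilesR T.tiles) := by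
    intro x hx
    simp only [Set.mem_iUnion] at hx
    obtain ⟨t, ht, hx⟩ := hx
    obtain ⟨y, hyt, hyp⟩ := (hF t ht).2
    have h1 := T.dist_le hT (hF t ht).1 (interior_subset (hint t ht hx)) hyt
    have h2 := dist_triangle x y p
    rw [mem_closedBall] at hyp ⊢
    linarith
  have hvol := measure_mono (μ := (volume : Measure Plane)) hsub
  rw [measure_biUnion_finset hdisj (fun _ _ => measurableSet_ball)] at hvol
  simp only [Measure.addHaar_ball_of_pos volume _ hs0,
    Measure.addHaar_closedBall volume p (by positivity : 0 ≤ 4 * tilesR T.tiles),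
    Finset.sum_const, finrank_euclideanSpace, Fintype.card_fin, nsmul_eq_mul] at hvol
  rw [← mul_assoc, ENNReal.mul_le_mul_iff_left (measure_ball_pos _ _ one_pos).ne'
    measure_ball_lt_top.ne, ← ENNReal.ofReal_natCast, ← ENNReal.ofReal_mul (by positivity)] at hvol
  exact (ENNReal.ofReal_le_ofReal_iff (by positivity)).mp hvol

theorem card_le_tK (T : Tiling) (hT : LocFinite T.tiles) (p : Plane) (F : Finset (Set Plane))
    (hF : ∀ t ∈ F, t ∈ T.tiles ∧ (t ∩ closedBall p (2 * tilesR T.tiles)).Nonempty) :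
    F.card ≤ tK T.tiles := by
  have hr := hT.2
  refine Nat.le_floor ?_
  rw [le_div_iff₀ (by positivity)]
  -- let `s` increase to `r_T` in the area comparison
  have hlim : Filter.Tendsto (fun s : ℝ => (F.card : ℝ) * s ^ 2)
      (nhdsWithin (tilesr T.tiles) (Set.Iio (tilesr T.tiles)))
      (nhds ((F.card : ℝ) * tilesr T.tiles ^ 2)) :=
    (Continuous.tendsto (by fun_prop) _).mono_left nhdsWithin_le_nhds
  refine le_of_tendsto hlim ?_
  filter_upwards [Ioo_mem_nhdsLT hr] with s hs
  have := card_mul_sq_le T hT p F hF hs.1 hs.2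
  linarith

/-- If a connected set contains `p` and leaves the ball of radius `ρ` about `p`, then the tiles
meeting it inside this ball number at least `ρ / (2 R_T)`: the images of these tiles under `dist p`
cover `[0, ρ]` and have length at most `2 R_T`. -/
theorem radius_le_card_mul (T : Tiling) (hT : LocFinite T.tiles) {Γ : Set Plane}
    (hΓ : IsPreconnected Γ) {p q : Plane} (hp : p ∈ Γ) (hq : q ∈ Γ) {ρ : ℝ}
    (hpq : ρ ≤ dist p q) (F : Finset (Set Plane))
    (hF : ∀ t ∈ T.tiles, (t ∩ (Γ ∩ closedBall p ρ)).Nonempty → t ∈ F)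
    (hFT : ∀ t ∈ F, t ∈ T.tiles) :
    ρ ≤ F.card * (2 * tilesR T.tiles) := by
  have hR := tilesR_nonneg T.tiles
  have hcover : Set.Icc 0 ρ ⊆ ⋃ t ∈ F, dist p '' t := by
    intro a ha
    have hcont : ContinuousOn (dist p) Γ := by fun_prop
    have hmem : a ∈ Set.Icc (dist p p) (dist p q) := by
      rw [dist_self]
      exact ⟨ha.1, ha.2.trans hpq⟩
    obtain ⟨x, hx, hxa⟩ := hΓ.intermediate_value hp hq hcont hmem
    have hxT : x ∈ ⋃₀ T.tiles := by rw [T.covers]; trivial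
    obtain ⟨t, ht, hxt⟩ := hxT
    simp only [Set.mem_iUnion]
    refine ⟨t, hF t ht ⟨x, hxt, hx, ?_⟩, x, hxt, hxa⟩
    rw [mem_closedBall, dist_comm, hxa]
    exact ha.2
  have hlen : ∀ t ∈ F, volume (dist p '' t) ≤ ENNReal.ofReal (2 * tilesR T.tiles) := by
    intro t ht
    refine (Real.volume_le_diam _).trans (ediam_le ?_)
    rintro _ ⟨x, hx, rfl⟩ _ ⟨y, hy, rfl⟩
    rw [edist_dist]
    refine ENNReal.ofReal_le_ofReal (le_trans ?_ (T.dist_le hT (hFT t ht) hx hy))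
    rw [dist_comm p x, dist_comm p y]
    exact dist_dist_dist_le_left x y p
  have h := (measure_mono (μ := (volume : Measure ℝ)) hcover).trans (measure_biUnion_finset_le F _)
  replace h := h.trans (Finset.sum_le_sum hlen)
  rw [Real.volume_Icc, sub_zero, Finset.sum_const, nsmul_eq_mul, ← ENNReal.ofReal_natCast,
    ← ENNReal.ofReal_mul (by positivity)] at h
  exact (ENNReal.ofReal_le_ofReal_iff (by positivity)).mp h

/-- Points of `Γ` at pairwise distance `> 2 ρ` are charged to disjoint families of tiles: those
meeting `Γ` in the balls of radius `ρ - R_T` about them. -/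
theorem card_separated_mul_le (T : Tiling) (hT : LocFinite T.tiles) {Γ : Set Plane}
    (hΓ : IsPreconnected Γ) {ρ : ℝ}
    (hesc : ∀ p ∈ Γ, ∃ q ∈ Γ, ρ - tilesR T.tiles ≤ dist p q)
    (hfin : {t ∈ T.tiles | (t ∩ Γ).Nonempty}.Finite) (S : Finset Plane)
    (hSΓ : ∀ p ∈ S, p ∈ Γ) (hS : (S : Set Plane).Pairwise fun p q => 2 * ρ < dist p q) :
    (S.card : ℝ) * (ρ - tilesR T.tiles) ≤ 2 * tilesR T.tiles * tL Γ T.tiles := by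
  classical
  have hR := tilesR_nonneg T.tiles
  let G : Plane → Finset (Set Plane) := fun p =>
    hfin.toFinset.filter fun t => (t ∩ (Γ ∩ closedBall p (ρ - tilesR T.tiles))).Nonempty
  have hG : ∀ p ∈ S, ρ - tilesR T.tiles ≤ (G p).card * (2 * tilesR T.tiles) := by
    intro p hp
    obtain ⟨q, hq, hpq⟩ := hesc p (hSΓ p hp)
    refine radius_le_card_mul T hT hΓ (hSΓ p hp) hq hpq (G p) ?_ ?_
    · intro t ht hne
      simp only [G, Finset.mem_filter, Set.Finite.mem_toFinset]
      exact ⟨⟨ht, hne.mono (Set.inter_subset_inter_right _ Set.inter_subset_left)⟩, hne⟩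
    · intro t ht
      simp only [G, Finset.mem_filter, Set.Finite.mem_toFinset] at ht
      exact ht.1.1
  have hdisj : (S : Set Plane).PairwiseDisjoint G := by
    intro p hp q hq hpq
    refine Finset.disjoint_left.mpr fun t htp htq => ?_
    simp only [G, Finset.mem_filter, Set.Finite.mem_toFinset] at htp htq
    obtain ⟨⟨ht, -⟩, x, hxt, -, hx⟩ := htp
    obtain ⟨-, y, hyt, -, hy⟩ := htq
    have h1 := T.dist_le hT ht hxt hyt
    have h2 := hS hp hq hpq
    have h3 := dist_triangle4 p x y q
    rw [mem_closedBall] at hx hy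
    rw [dist_comm] at hx
    linarith
  have hcard : ∑ p ∈ S, (G p).card ≤ tL Γ T.tiles := by
    rw [← Finset.card_biUnion hdisj, tL, Set.ncard_eq_toFinset_card _ hfin]
    exact Finset.card_le_card (Finset.biUnion_subset.mpr fun p _ => Finset.filter_subset _ _)
  calc (S.card : ℝ) * (ρ - tilesR T.tiles) = ∑ p ∈ S, (ρ - tilesR T.tiles) := by
        rw [Finset.sum_const, nsmul_eq_mul]
    _ ≤ ∑ p ∈ S, ((G p).card : ℝ) * (2 * tilesR T.tiles) := Finset.sum_le_sum hG
    _ = 2 * tilesR T.tiles * ((∑ p ∈ S, (G p).card : ℕ) : ℝ) := by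
        rw [← Finset.sum_mul, mul_comm]; push_cast; rfl
    _ ≤ 2 * tilesR T.tiles * tL Γ T.tiles := by gcongr

/-- If separated finite subsets of `Γ` have bounded cardinality, one of maximal cardinality is a
net. -/
theorem exists_separated_net {Γ : Set Plane} {d : ℝ} (hd : 0 ≤ d) (N : ℕ)
    (hN : ∀ S : Finset Plane, (∀ p ∈ S, p ∈ Γ) →
      (S : Set Plane).Pairwise (fun p q => d < dist p q) → S.card ≤ N) :
    ∃ S : Finset Plane, (∀ p ∈ S, p ∈ Γ) ∧
      (S : Set Plane).Pairwise (fun p q => d < dist p q) ∧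
      ∀ x ∈ Γ, ∃ p ∈ S, dist x p ≤ d := by
  classical
  let P : ℕ → Prop := fun n => ∃ S : Finset Plane, (∀ p ∈ S, p ∈ Γ) ∧
    (S : Set Plane).Pairwise (fun p q => d < dist p q) ∧ S.card = n
  have hP0 : P 0 := ⟨∅, by simp, by simp, rfl⟩
  obtain ⟨S, hSΓ, hS, hcard⟩ := Nat.findGreatest_spec (P := P) (Nat.zero_le N) hP0
  refine ⟨S, hSΓ, hS, fun x hx => ?_⟩
  by_contra! hfar
  have hxS : x ∉ S := fun h => by
    have := hfar x h
    rw [dist_self] at this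
    linarith
  have hS' : ((insert x S : Finset Plane) : Set Plane).Pairwise (fun p q => d < dist p q) := by
    rw [Finset.coe_insert]
    refine hS.insert fun p hp _ => ⟨hfar p hp, ?_⟩
    rw [dist_comm]
    exact hfar p hp
  have hSΓ' : ∀ p ∈ insert x S, p ∈ Γ := by
    intro p hp
    rcases Finset.mem_insert.mp hp with rfl | hp
    · exact hx
    · exact hSΓ p hp
  have h1 := Nat.le_findGreatest (P := P) (hN _ hSΓ' hS') ⟨_, hSΓ', hS', rfl⟩
  rw [Finset.card_insert_of_notMem hxS] at h1
  omega

theorem IsJordanCurve.isPreconnected {Γ : Set Plane} (hΓ : IsJordanCurve Γ) :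
    IsPreconnected Γ := by
  obtain ⟨f, hf, -, rfl⟩ := hΓ
  have hrank : 1 < Module.rank ℝ Plane := by
    rw [← Module.finrank_eq_rank, finrank_euclideanSpace, Fintype.card_fin]
    norm_num
  have : PreconnectedSpace (sphere (0 : Plane) 1) :=
    isPreconnected_iff_preconnectedSpace.mp (isPreconnected_sphere hrank 0 1)
  exact isPreconnected_range hf

/-- for a Jordan curve `Γ` and locally finite tilings `T, T'` with
`R_{T'} > R_T` and `K_{T'} < L(Γ,T') ≤ L(Γ,T)`, one has
`L(Γ,T') ≤ 2 K_{T'} (R_T/(R_{T'} - R_T)) L(Γ,T)`. -/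
theorem stmt_2 (Γ : Set Plane) (hΓ : IsJordanCurve Γ) (T T' : Tiling)
    (hT : LocFinite T.tiles) (hT' : LocFinite T'.tiles)
    (hR : tilesR T.tiles < tilesR T'.tiles)
    (hK : tK T'.tiles < tL Γ T'.tiles)
    (hL : tL Γ T'.tiles ≤ tL Γ T.tiles) :
    (tL Γ T'.tiles : ℝ) ≤
      2 * (tK T'.tiles : ℝ) * (tilesR T.tiles / (tilesR T'.tiles - tilesR T.tiles)) *
        (tL Γ T.tiles : ℝ) := by
  classical
  have hconn := hΓ.isPreconnected
  have hRn := tilesR_nonneg T.tiles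
  have hpos : 0 < tilesR T'.tiles - tilesR T.tiles := sub_pos.mpr hR
  -- `ncard` is `0` on infinite sets, so positivity of the two counts gives finiteness
  have hfin' : {t ∈ T'.tiles | (t ∩ Γ).Nonempty}.Finite :=
    Set.finite_of_ncard_pos ((Nat.zero_le _).trans_lt hK)
  have hfin : {t ∈ T.tiles | (t ∩ Γ).Nonempty}.Finite :=
    Set.finite_of_ncard_pos (((Nat.zero_le _).trans_lt hK).trans_le hL)
  have hcard' : tL Γ T'.tiles = hfin'.toFinset.card := Set.ncard_eq_toFinset_card _ hfin'
  have hesc : ∀ p ∈ Γ, ∃ q ∈ Γ, tilesR T'.tiles - tilesR T.tiles ≤ dist p q := by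
    intro p _
    by_contra! hnear
    refine hK.not_ge (hcard' ▸ card_le_tK T' hT' p _ fun t ht => ?_)
    obtain ⟨htT, x, hxt, hx⟩ := hfin'.mem_toFinset.mp ht
    refine ⟨htT, x, hxt, ?_⟩
    have := hnear x hx
    rw [mem_closedBall, dist_comm]
    linarith
  have hsep := card_separated_mul_le T hT hconn hesc hfin
  obtain ⟨S, hSΓ, hS, hnet⟩ := exists_separated_net (Γ := Γ) (d := 2 * tilesR T'.tiles)
    (by linarith)
    ⌊2 * tilesR T.tiles * tL Γ T.tiles / (tilesR T'.tiles - tilesR T.tiles)⌋₊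
    (fun S hSΓ hS => Nat.le_floor ((le_div_iff₀ hpos).mpr (hsep S hSΓ hS)))
  have hm := (le_div_iff₀ hpos).mpr (hsep S hSΓ hS)
  have hcov : tL Γ T'.tiles ≤ S.card * tK T'.tiles := by
    let B : Plane → Finset (Set Plane) := fun p =>
      hfin'.toFinset.filter fun t => (t ∩ closedBall p (2 * tilesR T'.tiles)).Nonempty
    have hsub : hfin'.toFinset ⊆ S.biUnion B := by
      intro t ht
      obtain ⟨-, x, hxt, hx⟩ := hfin'.mem_toFinset.mp ht
      obtain ⟨p, hp, hxp⟩ := hnet x hx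
      exact Finset.mem_biUnion.mpr
        ⟨p, hp, Finset.mem_filter.mpr ⟨ht, x, hxt, mem_closedBall.mpr hxp⟩⟩
    rw [hcard']
    refine (Finset.card_le_card hsub).trans (Finset.card_biUnion_le_card_mul _ _ _ fun p _ => ?_)
    refine card_le_tK T' hT' p _ fun t ht => ?_
    obtain ⟨h1, h2⟩ := Finset.mem_filter.mp ht
    exact ⟨(hfin'.mem_toFinset.mp h1).1, h2⟩
  calc (tL Γ T'.tiles : ℝ) ≤ S.card * tK T'.tiles := by exact_mod_cast hcov
    _ ≤ 2 * tilesR T.tiles * tL Γ T.tiles / (tilesR T'.tiles - tilesR T.tiles) * tK T'.tiles := by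
        gcongr
    _ = _ := by ring
end
end

section
/- Let S be a primitive substitution rule with dilation factor λ > 1 for a finite tile set P, with substitution map I_S and admissible set Ω_S = ∩_{k≥0} I_S^k(Ω_{ℰ,P}). Then I_S restricted to Ω_S is onto Ω_S; consequently, every admissible tiling T ∈ Ω_S admits a hierarchical sequence, i.e. a sequence (T^l)_{l≥0} of tilings with T^0 = T, T^l ∈ Ω_{ℰ,λ^l P}, and T^{l−1} = S_l(T^l) for all l ≥ 1. -/
/-!
An infinite chain `T = T₀, T₁, T₂, …` with `T_m = I_S(T_{m+1})` gives both claims: `T₁` is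
admissible, and `T^l = lam ^ l • T_l` is a hierarchical sequence (dilating a tiling keeps it made of
`E`-copies because isometries are affine and `E` contains the translations). Admissibility only
provides chains of every finite length `k`, so a compactness argument is needed.

The limit is taken along a nonprincipal ultrafilter on `k`: a set is declared a tile at level `m` if
it belongs to level `m` of almost all the finite chains. The limit is always a packing by copies of
prototiles; that it covers the plane is proved by induction on `m` (`limTiles_step`). Suppose level
`m` of the limit covers. Every prototile has nonempty interior (by Baire's theorem one of them does,
and primitivity spreads this to all, `interior_nonempty_of_primitive`), so tilings are locally
finite, and inside a bounded set the level-`m` tiles of almost all the chains belong to a fixed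
finite part of the limit (`limTiles_stabilize`). Hence a level-`m+1` tile near a given place has
only finitely many possible blocks of level-`m` tiles, and it is determined by its block, since the
union of the block is the dilated tile. The ultrafilter selects one of these finitely many
possibilities. Arguing with blocks makes symmetries of the tiles harmless and needs no closedness
assumption on `E`.
-/

noncomputable section

/-- Dilation of a subset of the plane by a factor `c`. -/
def scale (c : ℝ) (U : Set Plane) : Set Plane := (fun x : Plane => c • x) '' U

/-- `E` contains all translations of the plane. -/
def ContainsTranslations (E : Subgroup (Plane ≃ᵢ Plane)) : Prop :=
  ∀ v : Plane, ∃ g : Plane ≃ᵢ Plane, g ∈ E ∧ ∀ x, g x = v + x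

/-- `q` is an `E`-copy of `p`. -/
def ECopy (E : Subgroup (Plane ≃ᵢ Plane)) (p q : Set Plane) : Prop :=
  ∃ g : Plane ≃ᵢ Plane, g ∈ E ∧ q = g '' p

/-- A tiling of `Λ ⊆ ℝ²` that is `E`-generated by the prototiles `protos`:
a countable collection of `E`-copies of the prototiles covering `Λ` with pairwise
disjoint interiors. -/
structure PTiling (E : Subgroup (Plane ≃ᵢ Plane)) {n : ℕ}
    (protos : Fin n → Set Plane) (Λ : Set Plane) where
  tiles : Set (Set Plane)
  countable : tiles.Countable
  copies : ∀ t ∈ tiles, ∃ i, ECopy E (protos i) t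
  covers : ⋃₀ tiles = Λ
  disjInt : tiles.Pairwise fun t s => interior t ∩ interior s = ∅

/-- The prototiles dilated by `lam ^ l`. -/
def scaledP {n : ℕ} (p : Fin n → Set Plane) (lam : ℝ) (l : ℕ) : Fin n → Set Plane :=
  fun i => scale (lam ^ l) (p i)

/-- `T'` is the image of `T` under the substitution map `I_S`: each tile `t` of `T`
is dilated by `lam`, written as `g(λ pᵢ)` with `g ∈ E`, and replaced by the tiles of
`g(Sᵢ)`. -/
def SubstImage (E : Subgroup (Plane ≃ᵢ Plane)) {n : ℕ} (p : Fin n → Set Plane)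
    (lam : ℝ) (S : ∀ i, PTiling E p (scale lam (p i)))
    (T T' : PTiling E p Set.univ) : Prop :=
  ∃ D : Set Plane → Set (Set Plane),
    (∀ t ∈ T.tiles, ∃ g : Plane ≃ᵢ Plane, g ∈ E ∧ ∃ i,
        scale lam t = g '' scale lam (p i) ∧
        D t = (fun s => g '' s) '' (S i).tiles) ∧
    T'.tiles = ⋃ t ∈ T.tiles, D t

/-- A tiling `T` is admissible for `S`, i.e. `T ∈ Ω_S = ∩_{k ≥ 0} I_S^k(Ω_{E,P})`:
for every `k` there is a chain of `k` substitution steps ending at `T`. -/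
def Admissible (E : Subgroup (Plane ≃ᵢ Plane)) {n : ℕ} (p : Fin n → Set Plane)
    (lam : ℝ) (S : ∀ i, PTiling E p (scale lam (p i)))
    (T : PTiling E p Set.univ) : Prop :=
  ∀ k : ℕ, ∃ f : ℕ → PTiling E p Set.univ, f 0 = T ∧
    ∀ m < k, SubstImage E p lam S (f (m + 1)) (f m)

/-- `T = S_{l+1}(Tl1)`: the decomposition map at scale `l+1`; each tile
`g(λ^{l+1} pᵢ)` of `Tl1` is replaced by the tiles of `g(λ^l Sᵢ)`. -/
def DecompImage (E : Subgroup (Plane ≃ᵢ Plane)) {n : ℕ} (p : Fin n → Set Plane)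
    (lam : ℝ) (S : ∀ i, PTiling E p (scale lam (p i))) (l : ℕ) {Λ : Set Plane}
    (Tl1 : PTiling E (scaledP p lam (l + 1)) Λ)
    (T : PTiling E (scaledP p lam l) Λ) : Prop :=
  ∃ D : Set Plane → Set (Set Plane),
    (∀ t ∈ Tl1.tiles, ∃ g : Plane ≃ᵢ Plane, g ∈ E ∧ ∃ i,
        t = g '' scale (lam ^ (l + 1)) (p i) ∧
        D t = (fun s => g '' scale (lam ^ l) s) '' (S i).tiles) ∧
    T.tiles = ⋃ t ∈ Tl1.tiles, D t

/-- The number of `E`-copies of `q` among the tiles in `C`. -/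
def countCopies (E : Subgroup (Plane ≃ᵢ Plane)) (q : Set Plane)
    (C : Set (Set Plane)) : ℕ :=
  {t ∈ C | ECopy E q t}.ncard

/-- `N(Δ, T)` : the number of tiles contained in `Δ`. -/
def tN (Δ : Set Plane) (C : Set (Set Plane)) : ℕ := {t ∈ C | t ⊆ Δ}.ncard

/-- `N(Δ, T, q)` : the number of tiles contained in `Δ` that are `E`-copies of `q`. -/
def tNcopy (E : Subgroup (Plane ≃ᵢ Plane)) (q : Set Plane) (Δ : Set Plane)
    (C : Set (Set Plane)) : ℕ :=
  {t ∈ C | t ⊆ Δ ∧ ECopy E q t}.ncard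

/-- `Γ` is a Jordan curve bounding the topological closed disk `Δ`. -/
def BoundsDisk (Γ Δ : Set Plane) : Prop :=
  IsJordanCurve Γ ∧ Nonempty (Δ ≃ₜ unitDisk) ∧ frontier Δ = Γ

section Helpers

open Set Filter Topology

/-! ### Dilations and isometries -/

lemma scale_eq_homeo {c : ℝ} (hc : c ≠ 0) (U : Set Plane) :
    scale c U = Homeomorph.smulOfNeZero c hc '' U := rfl

lemma scale_scale (a b : ℝ) (U : Set Plane) : scale a (scale b U) = scale (a * b) U := by
  simp only [scale, image_image, smul_smul]

lemma scale_injective {c : ℝ} (hc : c ≠ 0) : Function.Injective (scale c) :=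
  (Homeomorph.smulOfNeZero (α := Plane) c hc).injective.image_injective

lemma interior_scale {c : ℝ} (hc : c ≠ 0) (U : Set Plane) :
    interior (scale c U) = scale c (interior U) := by
  rw [scale_eq_homeo hc, scale_eq_homeo hc, Homeomorph.image_interior]

lemma interior_isometry_image (g : Plane ≃ᵢ Plane) (U : Set Plane) :
    interior (g '' U) = g '' interior U :=
  (g.toHomeomorph.image_interior U).symm

/-- Dilations normalize `E`: since isometries are affine, conjugating `g` by a dilation only
changes its translation part, and `E` contains all translations. -/
lemma exists_conj_dilation {E : Subgroup (Plane ≃ᵢ Plane)} (hE : ContainsTranslations E)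
    {g : Plane ≃ᵢ Plane} (hg : g ∈ E) (c : ℝ) :
    ∃ g' ∈ E, ∀ x, g' (c • x) = c • g x := by
  obtain ⟨τ, hτ, hτx⟩ := hE (c • g 0 - g 0)
  refine ⟨τ * g, E.mul_mem hτ hg, fun x => ?_⟩
  have h1 := g.toRealLinearIsometryEquiv.map_smul c x
  simp only [IsometryEquiv.toRealLinearIsometryEquiv_apply] at h1
  rw [IsometryEquiv.mul_apply, hτx, sub_eq_iff_eq_add.1 h1, smul_sub]
  abel

/-! ### Interiors and local finiteness -/

/-- If countably many closed sets cover a set `s` with nonempty interior, then the interior of one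
of them meets the interior of `s` (Baire). -/
lemma exists_interior_inter_of_cover {s : Set Plane} {W : Set (Set Plane)} (hW : W.Countable)
    (hcl : ∀ t ∈ W, IsClosed t) (hs : (interior s).Nonempty) (hcov : s ⊆ ⋃₀ W) :
    ∃ t ∈ W, (interior t ∩ interior s).Nonempty := by
  have hd := dense_sUnion_interior_of_closed (S := insert (interior s)ᶜ W)
    (by
      rintro t (rfl | ht)
      · exact isOpen_interior.isClosed_compl
      · exact hcl t ht)
    (hW.insert _)
    (by
      refine eq_univ_of_forall fun x => ?_
      by_cases hx : x ∈ interior s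
      · obtain ⟨t, ht, hxt⟩ := hcov (interior_subset hx)
        exact ⟨t, Or.inr ht, hxt⟩
      · exact ⟨_, Or.inl rfl, hx⟩)
  obtain ⟨x, hxs, hx⟩ := hd.inter_open_nonempty _ isOpen_interior hs
  simp only [mem_iUnion] at hx
  obtain ⟨t, rfl | ht, hxt⟩ := hx
  · exact absurd hxs (interior_subset hxt)
  · exact ⟨t, ht, x, hxt, hxs⟩

/-- A packing by sets of diameter at most `d`, each containing a ball of radius `r`, is locally
finite. -/
lemma locally_finite_of_packing {C : Set (Set Plane)} {r d : ℝ} (hr : 0 < r)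
    (hdisj : C.Pairwise fun t s => interior t ∩ interior s = ∅)
    (hin : ∀ t ∈ C, ∃ c, Metric.ball c r ⊆ t)
    (hout : ∀ t ∈ C, ∀ x ∈ t, ∀ y ∈ t, dist x y ≤ d)
    {A : Set Plane} (hA : Bornology.IsBounded A) :
    {t ∈ C | (t ∩ A).Nonempty}.Finite := by
  choose! c hc using hin
  have hcint : ∀ t ∈ C, ∀ y, dist y (c t) < r → y ∈ interior t := fun t ht y hy =>
    interior_maximal (hc t ht) Metric.isOpen_ball hy
  have hB : Bornology.IsBounded (Metric.cthickening d A) := hA.cthickening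
  obtain ⟨N, hN, hNcov⟩ := Metric.totallyBounded_iff.1
    (hB.isCompact_closure.totallyBounded.subset subset_closure) r hr
  have hmem : ∀ t ∈ {t ∈ C | (t ∩ A).Nonempty}, ∃ y ∈ N, dist (c t) y < r := by
    rintro t ⟨ht, a, hat, haA⟩
    have hct : c t ∈ t := hc t ht (Metric.mem_ball_self hr)
    have : c t ∈ Metric.cthickening d A :=
      Metric.mem_cthickening_of_dist_le _ a d A haA (hout t ht _ hct _ hat)
    simpa using hNcov this
  choose! y hyN hy using hmem
  -- Two tiles whose centres are within `r` of the same net point share that point in the interior.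
  refine Finite.of_finite_image (f := y) (hN.subset (image_subset_iff.2 hyN)) ?_
  intro t ht s hs hts
  by_contra hne
  have h1 := hcint t ht.1 (y t) (by rw [dist_comm]; exact hy t ht)
  have h2 := hcint s hs.1 (y t) (by rw [dist_comm, hts]; exact hy s hs)
  exact (eq_empty_iff_forall_notMem.1 (hdisj ht.1 hs.1 hne)) _ ⟨h1, h2⟩

/-- As soon as a tiling of the plane exists, primitivity forces every prototile to have nonempty
interior: one of them does by Baire, and each prototile contains, after inflation, a copy of it. -/
lemma interior_nonempty_of_primitive {E : Subgroup (Plane ≃ᵢ Plane)}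
    {n : ℕ} {p : Fin n → Set Plane} (hp : ∀ i, IsTile (p i)) {lam : ℝ} (hlam : lam ≠ 0)
    (S : ∀ i, PTiling E p (scale lam (p i))) {M : Matrix (Fin n) (Fin n) ℕ}
    (hM : ∀ i j, M i j = countCopies E (p i) (S j).tiles)
    (hprim : ∃ k : ℕ, 0 < k ∧ ∀ i j, 0 < (M ^ k) i j) (T : PTiling E p univ) (j : Fin n) :
    (interior (p j)).Nonempty := by
  obtain ⟨i, hi⟩ : ∃ i, (interior (p i)).Nonempty := by
    obtain ⟨t, ht, x, hxt, -⟩ := exists_interior_inter_of_cover (s := univ) T.countable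
      (fun t ht => by
        obtain ⟨i, g, -, rfl⟩ := T.copies t ht
        exact g.toHomeomorph.isClosedMap _ (hp i).1)
      (by simp) T.covers.ge
    obtain ⟨i, g, -, rfl⟩ := T.copies t ht
    rw [interior_isometry_image] at hxt
    exact ⟨i, image_nonempty.1 ⟨x, hxt⟩⟩
  obtain ⟨k, -, hk⟩ := hprim
  have key : ∀ k j, 0 < (M ^ k) i j → (interior (p j)).Nonempty := by
    intro k
    induction k with
    | zero =>
      intro j hj
      by_cases hij : i = j
      · exact hij ▸ hi
      · simp [hij] at hj
    | succ k ih =>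
      intro j hj
      rw [pow_succ, Matrix.mul_apply] at hj
      obtain ⟨l, -, hl⟩ := Finset.exists_ne_zero_of_sum_ne_zero hj.ne'
      have h1 := ih l (Nat.pos_of_ne_zero (left_ne_zero_of_mul hl))
      have h2 := right_ne_zero_of_mul hl
      rw [hM] at h2
      obtain ⟨t, ht, g, -, rfl⟩ := nonempty_of_ncard_ne_zero h2
      have h3 : g '' interior (p l) ⊆ scale lam (interior (p j)) := by
        rw [← interior_isometry_image, ← interior_scale hlam]
        exact interior_mono ((subset_sUnion_of_mem ht).trans (S j).covers.le)
      exact image_nonempty.1 ((h1.image g).mono h3)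
  exact key k j (hk i j)

/-- Common bounds for all `E`-copies of the prototiles: they are closed, contain a ball of a fixed
radius `r > 0`, and have diameter at most `d`. -/
lemma exists_uniform_bounds (E : Subgroup (Plane ≃ᵢ Plane)) {n : ℕ} {p : Fin n → Set Plane}
    (hp : ∀ i, IsTile (p i)) (hint : ∀ i, (interior (p i)).Nonempty) :
    ∃ r > 0, ∃ d : ℝ, ∀ t, (∃ i, ECopy E (p i) t) →
      IsClosed t ∧ (∃ c, Metric.ball c r ⊆ t) ∧ ∀ x ∈ t, ∀ y ∈ t, dist x y ≤ d := by
  have hb : ∀ i, ∃ d : ℝ, ∀ x ∈ p i, ∀ y ∈ p i, dist x y ≤ d := by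
    intro i
    obtain ⟨e⟩ := (hp i).2
    have hc : IsCompact unitDisk := isCompact_closedBall _ _
    have : CompactSpace unitDisk := isCompact_iff_compactSpace.1 hc
    have : CompactSpace (p i) := e.symm.compactSpace
    have hpi : IsCompact (p i) := isCompact_iff_compactSpace.2 this
    obtain ⟨d, hd⟩ := Metric.isBounded_iff.1 hpi.isBounded
    exact ⟨d, fun x hx y hy => hd hx hy⟩
  have hr : ∀ i, ∃ ρ > 0, ∃ c, Metric.ball c ρ ⊆ p i := by
    intro i
    obtain ⟨c, hc⟩ := hint i
    obtain ⟨ρ, hρ, h⟩ := Metric.isOpen_iff.1 isOpen_interior c hc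
    exact ⟨ρ, hρ, c, h.trans interior_subset⟩
  choose d hd using hb
  choose ρ hρ c hc using hr
  obtain ⟨r, hr0, hr⟩ : ∃ r : ℝ, 0 < r ∧ ∀ i, r ≤ ρ i := by
    have h : ∀ᶠ r in 𝓝[>] (0 : ℝ), ∀ i, r ≤ ρ i := eventually_all.2 fun i =>
      nhdsWithin_le_nhds (eventually_le_nhds (hρ i))
    exact (eventually_mem_nhdsWithin.and h).exists
  refine ⟨r, hr0, ∑ i, |d i|, ?_⟩
  rintro t ⟨i, g, -, rfl⟩
  refine ⟨g.toHomeomorph.isClosedMap _ (hp i).1, ⟨g (c i), ?_⟩, ?_⟩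
  · rw [← IsometryEquiv.image_ball]
    exact image_mono ((Metric.ball_subset_ball (hr i)).trans (hc i))
  · rintro _ ⟨x, hx, rfl⟩ _ ⟨y, hy, rfl⟩
    rw [g.dist_eq]
    exact (hd i x hx y hy).trans ((le_abs_self _).trans
      (Finset.single_le_sum (f := fun i => |d i|) (fun _ _ => abs_nonneg _) (Finset.mem_univ i)))

/-! ### Ultrafilter limits of substitution chains -/

/-- One substitution step at a single tile `t`:
the dilated tile `lam t` is written as `g (lam pᵢ)` and replaced by the collection `B = g (Sᵢ)`. -/
def IsBlock (E : Subgroup (Plane ≃ᵢ Plane)) {n : ℕ} (p : Fin n → Set Plane)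
    (lam : ℝ) (S : ∀ i, PTiling E p (scale lam (p i))) (t : Set Plane)
    (B : Set (Set Plane)) : Prop :=
  ∃ g : Plane ≃ᵢ Plane, g ∈ E ∧ ∃ i,
    scale lam t = g '' scale lam (p i) ∧ B = (fun s => g '' s) '' (S i).tiles

lemma IsBlock.sUnion_eq {E : Subgroup (Plane ≃ᵢ Plane)} {n : ℕ} {p : Fin n → Set Plane}
    {lam : ℝ} {S : ∀ i, PTiling E p (scale lam (p i))} {t : Set Plane} {B : Set (Set Plane)}
    (h : IsBlock E p lam S t B) : ⋃₀ B = scale lam t := by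
  obtain ⟨g, -, i, h1, rfl⟩ := h
  rw [h1, sUnion_image, ← image_iUnion₂, ← sUnion_eq_biUnion, (S i).covers]

/-- The ultrafilter limit of a sequence of collections of tiles. -/
def limTiles (U : Ultrafilter ℕ) (F : ℕ → Set (Set Plane)) : Set (Set Plane) :=
  {t | ∀ᶠ k in U, t ∈ F k}

/-- Local stabilization: if the limit `limTiles U F` of packings by tiles of uniformly bounded size
covers the plane, then, for `U`-almost every `k`, all tiles of `F k` inside a given bounded set
belong to one finite part of the limit. -/
lemma limTiles_stabilize (U : Ultrafilter ℕ) {F : ℕ → Set (Set Plane)} {r d : ℝ} (hr : 0 < r)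
    (hdisj : ∀ k, (F k).Pairwise fun t s => interior t ∩ interior s = ∅)
    (hb : ∀ k, ∀ t ∈ F k,
      IsClosed t ∧ (∃ c, Metric.ball c r ⊆ t) ∧ ∀ x ∈ t, ∀ y ∈ t, dist x y ≤ d)
    (hcov : ⋃₀ limTiles U F = univ) {A : Set Plane} (hA : Bornology.IsBounded A) :
    ∃ W ⊆ limTiles U F, W.Finite ∧ ∀ᶠ k in U, ∀ s ∈ F k, s ⊆ A → s ∈ W := by
  have hbl : ∀ t ∈ limTiles U F, ∃ k, t ∈ F k := fun t ht => ht.exists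
  have hfin : {t ∈ limTiles U F | (t ∩ A).Nonempty}.Finite := by
    refine locally_finite_of_packing (d := d) hr ?_ ?_ ?_ hA
    · intro t ht s hs hne
      obtain ⟨k, hk1, hk2⟩ := (Eventually.and ht hs).exists
      exact hdisj k hk1 hk2 hne
    · intro t ht
      obtain ⟨k, hk⟩ := hbl t ht
      exact (hb k t hk).2.1
    · intro t ht
      obtain ⟨k, hk⟩ := hbl t ht
      exact (hb k t hk).2.2
  refine ⟨_, sep_subset _ _, hfin, ?_⟩
  have hev : ∀ᶠ k in U, ∀ t ∈ {t ∈ limTiles U F | (t ∩ A).Nonempty}, t ∈ F k :=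
    (eventually_all_finite hfin).2 fun t ht => ht.1
  filter_upwards [hev] with k hk s hs hsA
  obtain ⟨c, hc⟩ := (hb k s hs).2.1
  obtain ⟨t, ht, hts⟩ := exists_interior_inter_of_cover (s := s) hfin.countable
    (fun t ht => (hb k t (hk t ht)).1)
    ⟨c, interior_maximal hc Metric.isOpen_ball (Metric.mem_ball_self hr)⟩
    (fun x hx => by
      obtain ⟨t, ht, hxt⟩ := hcov.ge (mem_univ x)
      exact ⟨t, ⟨ht, x, hxt, hsA hx⟩, hxt⟩)
  -- A tile of the limit overlapping `s` lies in the same packing `F k`, hence equals `s`.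
  have : t = s := by
    by_contra hne
    exact hts.ne_empty (hdisj k (hk t ht) hs hne)
  exact this ▸ ht

/-- The substitution relation passes to ultrafilter limits, and covering propagates upwards. A block
of `G k` over `F k` is eventually contained in a fixed finite set, so `U` selects one value
of it, and the block determines the tile it comes from. -/
lemma limTiles_step {E : Subgroup (Plane ≃ᵢ Plane)} {n : ℕ} {p : Fin n → Set Plane}
    {lam : ℝ} (hlam : lam ≠ 0) {S : ∀ i, PTiling E p (scale lam (p i))}
    (U : Ultrafilter ℕ) {F G : ℕ → Set (Set Plane)} {r d : ℝ} (hr : 0 < r)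
    (hdisj : ∀ k, (F k).Pairwise fun t s => interior t ∩ interior s = ∅)
    (hb : ∀ k, ∀ t ∈ F k,
      IsClosed t ∧ (∃ c, Metric.ball c r ⊆ t) ∧ ∀ x ∈ t, ∀ y ∈ t, dist x y ≤ d)
    (hbG : ∀ k, ∀ t ∈ G k, ∀ x ∈ t, ∀ y ∈ t, dist x y ≤ d)
    (hstep : ∀ᶠ k in U, ∃ D : Set Plane → Set (Set Plane),
      (∀ t ∈ G k, IsBlock E p lam S t (D t)) ∧ F k = ⋃ t ∈ G k, D t)
    (hcov : ⋃₀ limTiles U F = univ) :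
    ⋃₀ limTiles U G = univ ∧ ∃ D : Set Plane → Set (Set Plane),
      (∀ t ∈ limTiles U G, IsBlock E p lam S t (D t)) ∧
        limTiles U F = ⋃ t ∈ limTiles U G, D t := by
  have hstep' : ∃ D : ℕ → Set Plane → Set (Set Plane), ∀ᶠ k in U,
      (∀ t ∈ G k, IsBlock E p lam S t (D k t)) ∧ F k = ⋃ t ∈ G k, D k t := by
    classical
    refine ⟨fun k => if h : ∃ D : Set Plane → Set (Set Plane),
      (∀ t ∈ G k, IsBlock E p lam S t (D t)) ∧ F k = ⋃ t ∈ G k, D t then h.choose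
      else fun _ => ∅, ?_⟩
    filter_upwards [hstep] with k hk
    rw [dif_pos hk]
    exact hk.choose_spec
  obtain ⟨D, hD⟩ := hstep'
  -- Blocks of tiles that stay in a bounded set take a `U`-almost constant value inside the limit.
  have hconst : ∀ (τ : ℕ → Set Plane) (A : Set Plane), Bornology.IsBounded A →
      (∀ᶠ k in U, τ k ∈ G k ∧ scale lam (τ k) ⊆ A) →
      ∃ B ⊆ limTiles U F, ∀ᶠ k in U, D k (τ k) = B := by
    intro τ A hA hτ
    obtain ⟨W, hWF, hW, hWk⟩ := limTiles_stabilize U hr hdisj hb hcov hA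
    have h : ∀ᶠ k in U, ∃ B ∈ 𝒫 W, D k (τ k) = B := by
      filter_upwards [hτ, hWk, hD] with k ⟨h1, h2⟩ h3 ⟨h4, h5⟩
      refine ⟨_, fun s hs => h3 s ?_ ?_, rfl⟩
      · rw [h5]; exact mem_biUnion h1 hs
      · exact (subset_sUnion_of_mem hs).trans ((h4 _ h1).sUnion_eq.le.trans h2)
    obtain ⟨B, hB, hBk⟩ := (Ultrafilter.eventually_exists_mem_iff hW.finite_subsets).1 h
    exact ⟨B, hB.trans hWF, hBk⟩
  have hbdd : ∀ k, ∀ t ∈ G k, Bornology.IsBounded (scale lam t) := fun k t ht =>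
    (Metric.isBounded_iff.2 ⟨d, fun x hx y hy => hbG k t ht x hx y hy⟩).smul₀ lam
  have hlim : ∀ t ∈ limTiles U G, ∃ B ⊆ limTiles U F, ∀ᶠ k in U, D k t = B := by
    intro t ht
    obtain ⟨k, hk⟩ := ht.exists
    exact hconst (fun _ => t) _ (hbdd k t hk) (ht.mono fun _ h => ⟨h, subset_rfl⟩)
  choose! Dlim hDF hDk using hlim
  have hblock : ∀ t ∈ limTiles U G, IsBlock E p lam S t (Dlim t) := by
    intro t ht
    obtain ⟨k, hk1, hk2, hk3, -⟩ := (ht.and ((hDk t ht).and hD)).exists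
    exact hk2 ▸ hk3 t hk1
  have hparent : ∀ s ∈ limTiles U F, ∃ t ∈ limTiles U G, s ∈ Dlim t := by
    intro s hs
    have h : ∀ᶠ k in U, ∃ t, t ∈ G k ∧ s ∈ D k t := by
      filter_upwards [hs, hD] with k h1 ⟨_, h2⟩
      rw [h2] at h1
      simpa using h1
    have hτ : ∃ τ : ℕ → Set Plane, ∀ᶠ k in U, τ k ∈ G k ∧ s ∈ D k (τ k) :=
      h.choice
    obtain ⟨τ, hτ⟩ := hτ
    obtain ⟨k₀, hk₀⟩ := hs.exists
    obtain ⟨c, hc⟩ := (hb k₀ s hk₀).2.1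
    have hcs : c ∈ s := hc (Metric.mem_ball_self hr)
    obtain ⟨B, hBF, hB⟩ := hconst τ (Metric.closedBall c (|lam| * d)) Metric.isBounded_closedBall
      (by
        filter_upwards [hτ, hD] with k ⟨h1, h2⟩ ⟨h3, _⟩
        refine ⟨h1, ?_⟩
        obtain ⟨y, hy, rfl⟩ := (h3 _ h1).sUnion_eq.le (mem_sUnion_of_mem hcs h2)
        rintro _ ⟨x, hx, rfl⟩
        simp only [Metric.mem_closedBall]
        rw [dist_smul₀, Real.norm_eq_abs]
        exact mul_le_mul_of_nonneg_left (hbG k _ h1 x hx y hy) (abs_nonneg _))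
    obtain ⟨k₁, hk₁, hk₂, hk₃, -⟩ := (hτ.and (hB.and hD)).exists
    -- The tile is recovered from its block, so it is `U`-almost constant as well.
    have hconstτ : ∀ᶠ k in U, τ k = τ k₁ := by
      filter_upwards [hτ, hB, hD] with k h1 h2 ⟨h3, _⟩
      apply scale_injective hlam
      rw [← (h3 _ h1.1).sUnion_eq, ← (hk₃ _ hk₁.1).sUnion_eq, h2, hk₂]
    have hmem : τ k₁ ∈ limTiles U G := by
      filter_upwards [hconstτ, hτ] with k h1 h2
      exact h1 ▸ h2.1
    refine ⟨τ k₁, hmem, ?_⟩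
    obtain ⟨k, h1, h2, h3⟩ := (hconstτ.and (hτ.and (hDk _ hmem))).exists
    rw [← h3, ← h1]
    exact h2.2
  refine ⟨eq_univ_of_forall fun x => ?_, Dlim, hblock, ?_⟩
  · obtain ⟨s, hs, hxs⟩ := hcov.ge (mem_univ (lam • x))
    obtain ⟨t, ht, hst⟩ := hparent s hs
    obtain ⟨y, hy, hyx⟩ := (hblock t ht).sUnion_eq.le (mem_sUnion_of_mem hxs hst)
    exact ⟨t, ht, smul_right_injective Plane hlam hyx ▸ hy⟩
  · refine Subset.antisymm (fun s hs => ?_) (iUnion₂_subset hDF)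
    obtain ⟨t, ht, hst⟩ := hparent s hs
    exact mem_biUnion ht hst

/-- Every admissible tiling is the bottom of an infinite chain of substitution steps. -/
lemma exists_infinite_chain (E : Subgroup (Plane ≃ᵢ Plane))
    {n : ℕ} (p : Fin n → Set Plane) (hp : ∀ i, IsTile (p i)) (lam : ℝ) (hlam : lam ≠ 0)
    (S : ∀ i, PTiling E p (scale lam (p i))) (hint : ∀ i, (interior (p i)).Nonempty)
    (T : PTiling E p univ) (hT : Admissible E p lam S T) :
    ∃ f : ℕ → PTiling E p univ, (f 0).tiles = T.tiles ∧
      ∀ m, SubstImage E p lam S (f (m + 1)) (f m) := by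
  obtain ⟨r, hr, d, hb⟩ := exists_uniform_bounds E hp hint
  choose f hf0 hf using hT
  let U : Ultrafilter ℕ := hyperfilter ℕ
  let L : ℕ → Set (Set Plane) := fun m => limTiles U fun k => (f k m).tiles
  have hstep := fun m => limTiles_step (S := S) hlam U (F := fun k => (f k m).tiles)
    (G := fun k => (f k (m + 1)).tiles) hr (fun k => (f k m).disjInt)
    (fun k t ht => hb t ((f k m).copies t ht))
    (fun k t ht => (hb t ((f k (m + 1)).copies t ht)).2.2)
    (by
      have : ∀ᶠ k in U, m < k := by
        have h := eventually_gt_atTop m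
        rw [← Nat.cofinite_eq_atTop] at h
        exact hyperfilter_le_cofinite h
      filter_upwards [this] with k hk
      exact hf k m hk)
  have hL0 : L 0 = T.tiles := by
    ext t
    simp [L, limTiles, hf0]
  have hcov : ∀ m, ⋃₀ L m = univ := by
    intro m
    induction m with
    | zero => rw [hL0]; exact T.covers
    | succ m ih => exact (hstep m ih).1
  have hcopies : ∀ m, ∀ t ∈ L m, ∃ i, ECopy E (p i) t := by
    intro m t ht
    obtain ⟨k, hk⟩ := Eventually.exists ht
    exact (f k m).copies t hk
  have hdisj : ∀ m, (L m).Pairwise fun t s => interior t ∩ interior s = ∅ := by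
    intro m t ht s hs hne
    obtain ⟨k, hk1, hk2⟩ := (Eventually.and ht hs).exists
    exact (f k m).disjInt hk1 hk2 hne
  refine ⟨fun m => ⟨L m, ?_, hcopies m, hcov m, hdisj m⟩, hL0, fun m => (hstep m (hcov m)).2⟩
  refine Set.PairwiseDisjoint.countable_of_isOpen (s := interior)
    (fun t ht s hs hne => disjoint_iff_inter_eq_empty.2 (hdisj m ht hs hne))
    (fun _ _ => isOpen_interior) fun t ht => ?_
  obtain ⟨i, g, -, rfl⟩ := hcopies m t ht
  rw [interior_isometry_image]
  exact (hint i).image g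

/-! ### Dilated tilings and decomposition -/

/-- The tiling `lam ^ l • T`, a tiling by copies of the dilated prototiles. -/
def dilateTiling {E : Subgroup (Plane ≃ᵢ Plane)} (hE : ContainsTranslations E)
    {n : ℕ} {p : Fin n → Set Plane} {lam : ℝ} (hlam : lam ≠ 0) (l : ℕ)
    (T : PTiling E p univ) : PTiling E (scaledP p lam l) univ where
  tiles := scale (lam ^ l) '' T.tiles
  countable := T.countable.image _
  copies := by
    rintro _ ⟨t, ht, rfl⟩
    obtain ⟨i, g, hg, rfl⟩ := T.copies t ht
    obtain ⟨g', hg', h⟩ := exists_conj_dilation hE hg (lam ^ l)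
    exact ⟨i, g', hg', by simp only [scaledP, scale, image_image, h]⟩
  covers := by
    refine eq_univ_of_forall fun x => ?_
    obtain ⟨t, ht, hxt⟩ := T.covers.ge (mem_univ ((lam ^ l)⁻¹ • x))
    exact ⟨_, ⟨t, ht, rfl⟩, _, hxt, smul_inv_smul₀ (pow_ne_zero l hlam) x⟩
  disjInt := by
    rintro _ ⟨t, ht, rfl⟩ _ ⟨s, hs, rfl⟩ hne
    have hc := pow_ne_zero l hlam
    rw [interior_scale hc, interior_scale hc, scale, scale,
      ← image_inter (smul_right_injective Plane hc),
      T.disjInt ht hs (fun h => hne (h ▸ rfl)), image_empty]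

lemma SubstImage.decompImage {E : Subgroup (Plane ≃ᵢ Plane)} (hE : ContainsTranslations E)
    {n : ℕ} {p : Fin n → Set Plane} {lam : ℝ} (hlam : lam ≠ 0)
    {S : ∀ i, PTiling E p (scale lam (p i))} {T' T : PTiling E p univ}
    (h : SubstImage E p lam S T' T) (l : ℕ) :
    DecompImage E p lam S l (dilateTiling hE hlam (l + 1) T') (dilateTiling hE hlam l T) := by
  obtain ⟨D, hD, hT⟩ := h
  have hinv : ∀ t, scale (lam ^ (l + 1))⁻¹ (scale (lam ^ (l + 1)) t) = t := fun t => by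
    rw [scale_scale, inv_mul_cancel₀ (pow_ne_zero _ hlam)]
    simp [scale]
  refine ⟨fun t => scale (lam ^ l) '' D (scale (lam ^ (l + 1))⁻¹ t), ?_, ?_⟩
  · rintro _ ⟨t, ht, rfl⟩
    obtain ⟨g, hg, i, h1, h2⟩ := hD t ht
    obtain ⟨g', hg', h⟩ := exists_conj_dilation hE hg (lam ^ l)
    have hset : ∀ s, g' '' scale (lam ^ l) s = scale (lam ^ l) (g '' s) := fun s => by
      simp only [scale, image_image, h]
    refine ⟨g', hg', i, ?_, ?_⟩
    · rw [pow_succ, ← scale_scale, ← scale_scale, h1, hset]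
    · beta_reduce
      rw [hinv, h2, image_image]
      simp only [hset]
  · change scale (lam ^ l) '' T.tiles = ⋃ t ∈ scale (lam ^ (l + 1)) '' T'.tiles, _
    rw [biUnion_image, hT, image_iUnion₂]
    simp only [hinv]

end Helpers

/-- for a primitive substitution rule `S`, the substitution map `I_S`
restricted to `Ω_S` is onto `Ω_S`; consequently every admissible tiling admits a
hierarchical sequence. -/
theorem stmt_11 (E : Subgroup (Plane ≃ᵢ Plane)) (hE : ContainsTranslations E)
    {n : ℕ} (p : Fin n → Set Plane) (hp : ∀ i, IsTile (p i))
    (lam : ℝ) (hlam : 1 < lam)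
    (S : ∀ i, PTiling E p (scale lam (p i)))
    (M : Matrix (Fin n) (Fin n) ℕ)
    (hM : ∀ i j, M i j = countCopies E (p i) (S j).tiles)
    (hprim : ∃ k : ℕ, 0 < k ∧ ∀ i j, 0 < (M ^ k) i j) :
    -- `I_S` restricted to `Ω_S` is onto `Ω_S`
    (∀ T : PTiling E p Set.univ, Admissible E p lam S T →
      ∃ T' : PTiling E p Set.univ, Admissible E p lam S T' ∧
        SubstImage E p lam S T' T) ∧
    -- every admissible tiling admits a hierarchical sequence
    (∀ T : PTiling E p Set.univ, Admissible E p lam S T →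
      ∃ Tseq : ∀ l : ℕ, PTiling E (scaledP p lam l) Set.univ,
        (Tseq 0).tiles = T.tiles ∧
        ∀ l : ℕ, DecompImage E p lam S l (Tseq (l + 1)) (Tseq l)) := by
  have hlam0 : lam ≠ 0 := by positivity
  have chain : ∀ T : PTiling E p Set.univ, Admissible E p lam S T →
      ∃ f : ℕ → PTiling E p Set.univ, (f 0).tiles = T.tiles ∧
        ∀ m, SubstImage E p lam S (f (m + 1)) (f m) := fun T hT =>
    exists_infinite_chain E p hp lam hlam0 S
      (interior_nonempty_of_primitive hp hlam0 S hM hprim T) T hT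
  refine ⟨fun T hT => ?_, fun T hT => ?_⟩
  · obtain ⟨f, hf0, hf⟩ := chain T hT
    refine ⟨f 1, fun k => ⟨fun m => f (m + 1), rfl, fun m _ => hf (m + 1)⟩, ?_⟩
    obtain ⟨D, hD, h⟩ := hf 0
    exact ⟨D, hD, hf0 ▸ h⟩
  · obtain ⟨f, hf0, hf⟩ := chain T hT
    refine ⟨fun l => dilateTiling hE hlam0 l (f l), ?_, fun l => (hf l).decompImage hE hlam0 l⟩
    change scale (lam ^ 0) '' (f 0).tiles = T.tiles
    have : scale (lam ^ 0) = id := by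
      funext t
      simp [scale]
    rw [this, Set.image_id, hf0]
end
end
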